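/- For a random permutation of Fin n × Fin 4, the probability of no rank-fixed point can be written as ∑ over (m0,...,m4) with ∑m_j = n of (-1)^{m1+m3} · multinomial(n;m0,...,m4) · 16^{m1} 72^{m2} 96^{m3} 24^{m4} · (4n - k)!/(4n)!, where k = m1+2m2+3m3+4m4; each summand has absolute value at most multinomial(n;m0,...,m4) · (4/(4n-3))^k · k-th falling-factorial bound, and the whole sum converges to e^{-4} as n → ∞. -/

import Mathlib

/-- The number of rank-derangements of a deck with `n` ranks and 4 suits:
permutations of `Fin n × Fin 4` (first coordinate = rank) sending every card to
a card of a different rank. -/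
def R (n : ℕ) : ℕ :=
  (Finset.univ.filter fun σ : Equiv.Perm (Fin n × Fin 4) => ∀ c, (σ c).1 ≠ c.1).card

/-- The summand in the inclusion-exclusion formula for the probability of no
rank-fixed point, indexed by the profile `m : Fin 5 → ℕ`. -/
noncomputable def term (n : ℕ) (m : Fin 5 → ℕ) : ℝ :=
  (-1) ^ (m 1 + m 3) * (Nat.multinomial Finset.univ m : ℝ) *
    16 ^ m 1 * 72 ^ m 2 * 96 ^ m 3 * 24 ^ m 4 *
    (Nat.factorial (4 * n - (m 1 + 2 * m 2 + 3 * m 3 + 4 * m 4)) : ℝ) /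
    (Nat.factorial (4 * n) : ℝ)

def goodEmb (n : ℕ) (T : Fin n → Finset (Fin 4)) :
    {f : {c : Fin n × Fin 4 // c.2 ∈ T c.1} ↪ Fin n × Fin 4 // ∀ a, (f a).1 = a.1.1} ≃
      (∀ r, (↥(T r) ↪ Fin 4)) where
  toFun f r := ⟨fun i => (f.1 ⟨(r, i.1), i.2⟩).2, by
    intro i j hij
    have h := f.1.injective (a₁ := ⟨(r, i.1), i.2⟩) (a₂ := ⟨(r, j.1), j.2⟩)
      (Prod.ext ((f.2 ⟨(r, i.1), i.2⟩).trans (f.2 ⟨(r, j.1), j.2⟩).symm) hij)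
    exact Subtype.ext (congrArg (fun x => x.1.2) h)⟩
  invFun g := ⟨⟨fun a => (a.1.1, g a.1.1 ⟨a.1.2, a.2⟩), by
    rintro ⟨⟨r, i⟩, hi⟩ ⟨⟨s, j⟩, hj⟩ h
    simp only [Prod.mk.injEq] at h
    obtain ⟨h1, h2⟩ := h
    subst h1
    have := (g r).injective h2
    simp only [Subtype.mk.injEq] at this
    subst this
    rfl⟩, fun a => rfl⟩
  left_inv f := by
    apply Subtype.ext
    ext a : 1
    exact Prod.ext (f.2 a).symm rfl
  right_inv g := by
    rfl

lemma card_goodEmb (n : ℕ) (T : Fin n → Finset (Fin 4)) :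
    Nat.card {f : {c : Fin n × Fin 4 // c.2 ∈ T c.1} ↪ Fin n × Fin 4 // ∀ a, (f a).1 = a.1.1}
      = ∏ r, Nat.descFactorial 4 (T r).card := by
  rw [Nat.card_congr (goodEmb n T), Nat.card_pi]
  refine Finset.prod_congr rfl fun r _ => ?_
  rw [Nat.card_eq_fintype_card, Fintype.card_embedding_eq]
  simp

lemma card_T (n : ℕ) (T : Fin n → Finset (Fin 4)) :
    Fintype.card {c : Fin n × Fin 4 // c.2 ∈ T c.1} = ∑ r, (T r).card := by
  rw [Fintype.card_subtype, Finset.card_filter, Fintype.sum_prod_type]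
  refine Finset.sum_congr rfl fun r _ => ?_
  rw [← Finset.card_filter]
  simp

noncomputable def permEquiv (n : ℕ) (T : Fin n → Finset (Fin 4)) :
    Equiv.Perm (Fin n × Fin 4) ≃
    Σ f : {c : Fin n × Fin 4 // c.2 ∈ T c.1} ↪ Fin n × Fin 4,
      {c : Fin n × Fin 4 // ¬ c.2 ∈ T c.1} ↪ ↥(Set.range f)ᶜ :=
  ((Equiv.embeddingEquivOfFinite (Fin n × Fin 4)).symm.trans
    (Equiv.embeddingCongr (Equiv.sumCompl fun c : Fin n × Fin 4 => c.2 ∈ T c.1).symm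
      (Equiv.refl _))).trans Equiv.sumEmbeddingEquivSigmaEmbeddingRestricted

lemma permEquiv_apply (n : ℕ) (T : Fin n → Finset (Fin 4)) (σ) (a) :
    (permEquiv n T σ).1 a = σ a.1 := rfl

lemma card_good (n : ℕ) (T : Fin n → Finset (Fin 4)) :
    (Finset.univ.filter fun σ : Equiv.Perm (Fin n × Fin 4) =>
      ∀ r, ∀ i ∈ T r, (σ (r, i)).1 = r).card =
    (∏ r, Nat.descFactorial 4 (T r).card) * (4 * n - ∑ r, (T r).card).factorial := by
  classical
  rw [← Fintype.card_subtype, ← Nat.card_eq_fintype_card]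
  let P : ({c : Fin n × Fin 4 // c.2 ∈ T c.1} ↪ Fin n × Fin 4) → Prop :=
    fun f => ∀ a, (f a).1 = a.1.1
  have e1 : {σ : Equiv.Perm (Fin n × Fin 4) // ∀ r, ∀ i ∈ T r, (σ (r, i)).1 = r} ≃
      {p : Σ f : {c : Fin n × Fin 4 // c.2 ∈ T c.1} ↪ Fin n × Fin 4,
      {c : Fin n × Fin 4 // ¬ c.2 ∈ T c.1} ↪ ↥(Set.range f)ᶜ // P p.1} :=
    (permEquiv n T).subtypeEquiv fun σ => by
      simp only [P, permEquiv_apply]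
      constructor
      · rintro h ⟨⟨r, i⟩, hi⟩
        exact h r i hi
      · intro h r i hi
        exact h ⟨(r, i), hi⟩
  rw [Nat.card_congr (e1.trans (Equiv.subtypeSigmaEquiv _ P)), Nat.card_sigma, ← card_goodEmb,
    Nat.card_eq_fintype_card]
  have hc : ∀ f : {c : Fin n × Fin 4 // c.2 ∈ T c.1} ↪ Fin n × Fin 4,
      Nat.card ({c : Fin n × Fin 4 // ¬ c.2 ∈ T c.1} ↪ ↥(Set.range f)ᶜ) =
        (4 * n - ∑ r, (T r).card).factorial := by
    intro f
    rw [Nat.card_eq_fintype_card, Fintype.card_embedding_eq, Fintype.card_subtype_compl,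
      Fintype.card_compl_set, Set.card_range_of_injective f.injective, card_T, Fintype.card_prod,
      Fintype.card_fin, Fintype.card_fin, mul_comm n 4, Nat.descFactorial_self]
  simp only [hc]
  simp [P]

lemma R_eq_sum (n : ℕ) : (R n : ℝ) = ∑ T : Fin n → Finset (Fin 4),
    (∏ r, ((-1) ^ (T r).card * (Nat.descFactorial 4 (T r).card : ℝ))) *
      ((4 * n - ∑ r, (T r).card).factorial : ℝ) := by
  classical
  have h1 : (R n : ℝ) = ∑ σ : Equiv.Perm (Fin n × Fin 4), ∏ r : Fin n, ∏ i : Fin 4,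
      ((-(if (σ (r, i)).1 = r then (1:ℝ) else 0)) + 1) := by
    rw [R, Finset.card_filter]
    push_cast
    refine Finset.sum_congr rfl fun σ _ => ?_
    rw [← Fintype.prod_prod_type']
    split_ifs with h
    · symm
      apply Finset.prod_eq_one
      intro c _
      simp [h c]
    · push Not at h
      obtain ⟨c, hc⟩ := h
      symm
      apply Finset.prod_eq_zero (Finset.mem_univ c)
      simp [hc]
  rw [h1]
  simp_rw [Finset.prod_add_one, Finset.powerset_univ]
  have h2 : ∀ σ : Equiv.Perm (Fin n × Fin 4), (∏ r : Fin n, ∑ t : Finset (Fin 4), ∏ i ∈ t,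
      (-(if (σ (r, i)).1 = r then (1:ℝ) else 0))) = ∑ T : Fin n → Finset (Fin 4),
      ∏ r, ∏ i ∈ T r, (-(if (σ (r, i)).1 = r then (1:ℝ) else 0)) := by
    intro σ
    rw [Finset.prod_univ_sum, Fintype.piFinset_univ]
  simp_rw [h2]
  rw [Finset.sum_comm]
  refine Finset.sum_congr rfl fun T _ => ?_
  have h3 : ∀ σ : Equiv.Perm (Fin n × Fin 4),
      ∏ r, ∏ i ∈ T r, (-(if (σ (r, i)).1 = r then (1:ℝ) else 0)) =
      (∏ r, (-1) ^ (T r).card) * (if ∀ r, ∀ i ∈ T r, (σ (r, i)).1 = r then (1:ℝ) else 0) := by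
    intro σ
    simp_rw [Finset.prod_neg, Finset.prod_mul_distrib]
    congr 1
    split_ifs with h
    · apply Finset.prod_eq_one
      intro r _
      apply Finset.prod_eq_one
      intro i hi
      simp [h r i hi]
    · push Not at h
      obtain ⟨r, i, hi, hr⟩ := h
      apply Finset.prod_eq_zero (Finset.mem_univ r)
      apply Finset.prod_eq_zero hi
      simp [hr]
  simp_rw [h3]
  rw [← Finset.mul_sum, Finset.prod_mul_distrib, mul_assoc, ← Nat.cast_prod, ← Nat.cast_mul,
    ← card_good, Finset.card_filter]
  push_cast
  rfl

open Polynomial in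
noncomputable def Lfun (n : ℕ) : ℝ[X] →ₗ[ℝ] ℝ :=
  Polynomial.lsum fun k => ((4 * n - k).factorial : ℝ) • LinearMap.id

open Polynomial in
lemma Lfun_mono (n k : ℕ) (a : ℝ) :
    Lfun n (C a * X ^ k) = a * ((4 * n - k).factorial : ℝ) := by
  rw [C_mul_X_pow_eq_monomial, Lfun, Polynomial.lsum_apply, Polynomial.sum_monomial_index]
  · simp [mul_comm]
  · simp

open Polynomial in
lemma R_formula (n : ℕ) : (R n : ℝ) / (Nat.factorial (4 * n) : ℝ) =
      ∑ m ∈ Finset.Nat.antidiagonalTuple 5 n, term n m := by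
  have hA : (R n : ℝ) = Lfun n ((∑ t : Finset (Fin 4),
      C ((-1) ^ t.card * (Nat.descFactorial 4 t.card : ℝ)) * X ^ t.card) ^ n) := by
    have : (∑ t : Finset (Fin 4),
      C ((-1) ^ t.card * (Nat.descFactorial 4 t.card : ℝ)) * X ^ t.card) ^ n =
      ∏ r : Fin n, (∑ t : Finset (Fin 4),
      C ((-1) ^ t.card * (Nat.descFactorial 4 t.card : ℝ)) * X ^ t.card) := by simp
    rw [this, Finset.prod_univ_sum, Fintype.piFinset_univ, map_sum, R_eq_sum]
    refine Finset.sum_congr rfl fun T _ => ?_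
    have h : ∏ i, (C ((-1) ^ (T i).card * (Nat.descFactorial 4 (T i).card : ℝ)) * X ^ (T i).card) =
        C (∏ i, ((-1) ^ (T i).card * (Nat.descFactorial 4 (T i).card : ℝ))) *
          X ^ (∑ i, (T i).card) := by
      rw [Finset.prod_mul_distrib, Finset.prod_pow_eq_pow_sum, map_prod]
    rw [h, Lfun_mono]
  let w : Fin 5 → ℝ := ![1, -16, 72, -96, 24]
  have hB : (∑ t : Finset (Fin 4),
      C ((-1) ^ t.card * (Nat.descFactorial 4 t.card : ℝ)) * X ^ t.card) =
      ∑ j : Fin 5, C (w j) * X ^ (j : ℕ) := by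
    rw [← Finset.powerset_univ, Finset.sum_powerset_apply_card
      (fun k : ℕ => C ((-1) ^ k * ((Nat.descFactorial 4 k : ℕ) : ℝ)) * (X : ℝ[X]) ^ k), Finset.card_fin,
      ← Fin.sum_univ_eq_sum_range (fun k => Nat.choose 4 k • (C ((-1) ^ k * (Nat.descFactorial 4 k : ℝ)) * (X : ℝ[X]) ^ k)) 5]
    refine Finset.sum_congr rfl fun j _ => ?_
    rw [← smul_mul_assoc, ← map_nsmul]
    congr 2
    fin_cases j <;> simp [w, Nat.descFactorial, Nat.choose] <;> norm_num
  rw [hA, hB, Finset.sum_pow_eq_sum_piAntidiag, map_sum, Finset.sum_div]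
  have hs : Finset.piAntidiag (Finset.univ : Finset (Fin 5)) n
      = Finset.Nat.antidiagonalTuple 5 n := by
    ext m
    simp [Finset.Nat.mem_antidiagonalTuple]
  rw [hs]
  refine Finset.sum_congr rfl fun m _ => ?_
  have : ((Nat.multinomial Finset.univ m : ℕ) : ℝ[X]) *
      ∏ i : Fin 5, (C (w i) * X ^ (i : ℕ)) ^ m i =
      C ((Nat.multinomial Finset.univ m : ℝ) * ∏ i, w i ^ m i) *
        X ^ (m 1 + 2 * m 2 + 3 * m 3 + 4 * m 4) := by
    simp_rw [mul_pow, Finset.prod_mul_distrib, ← pow_mul, Finset.prod_pow_eq_pow_sum]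
    rw [map_mul, map_natCast, map_prod, mul_assoc]
    simp_rw [map_pow]
    congr 3
    simp [Fin.sum_univ_five]
  rw [this, Lfun_mono, term]
  congr 2
  simp only [Fin.prod_univ_five, w]
  simp
  rw [neg_pow (16:ℝ), neg_pow (96:ℝ)]
  ring

lemma desc_sq (N k : ℕ) (hk : k ≤ N) : (N * (N + 1 - k)) ^ k ≤ N.descFactorial k ^ 2 := by
  have h : N.descFactorial k ^ 2 = ∏ i ∈ Finset.range k, ((N - i) * (N - (k - 1 - i))) := by
    rw [Finset.prod_mul_distrib, Finset.prod_range_reflect (fun i => N - i) k, sq,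
      Nat.descFactorial_eq_prod_range]
  rw [h]
  calc (N * (N + 1 - k)) ^ k = ∏ i ∈ Finset.range k, (N * (N + 1 - k)) := by simp
    _ ≤ _ := by
      apply Finset.prod_le_prod' 
      intro i hi
      have hi' := Finset.mem_range.1 hi
      obtain ⟨j, rfl⟩ : ∃ j, k = i + 1 + j := ⟨k - (i + 1), by omega⟩
      obtain ⟨d, rfl⟩ : ∃ d, N = i + 1 + j + d := ⟨N - (i + 1 + j), by omega⟩
      have e1 : i + 1 + j + d + 1 - (i + 1 + j) = d + 1 := by omega
      have e2 : i + 1 + j + d - i = 1 + j + d := by omega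
      have e3 : i + 1 + j + d - (i + 1 + j - 1 - i) = i + 1 + d := by omega
      rw [e1, e2, e3]
      nlinarith [Nat.zero_le (i * j)]

lemma weight_le (n a b c d : ℕ) (h : a + b + c + d ≤ n) :
    16 ^ a * 72 ^ b * 96 ^ c * 24 ^ d ≤
      (4 * (4 * n + 1 - (a + 2 * b + 3 * c + 4 * d))) ^ (a + 2 * b + 3 * c + 4 * d) := by
  set s := 4 * n + 1 - (a + 2 * b + 3 * c + 4 * d) with hs
  have hs' : s ≥ 3 * a + 2 * b + c + 1 := by omega
  have e : (4 * s) ^ (a + 2 * b + 3 * c + 4 * d) =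
      (4 * s) ^ a * ((4 * s) ^ 2) ^ b * ((4 * s) ^ 3) ^ c * ((4 * s) ^ 4) ^ d := by
    rw [pow_add, pow_add, pow_add, pow_mul, pow_mul, pow_mul]
  rw [e]
  have hA : 16 ^ a ≤ (4 * s) ^ a := by
    rcases Nat.eq_zero_or_pos a with rfl | ha
    · simp
    · exact Nat.pow_le_pow_left (by omega) _
  have hB : 72 ^ b ≤ ((4 * s) ^ 2) ^ b := by
    rcases Nat.eq_zero_or_pos b with rfl | ha
    · simp
    · exact Nat.pow_le_pow_left (le_trans (by norm_num) (Nat.pow_le_pow_left (show 12 ≤ 4 * s by omega) 2)) _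
  have hC : 96 ^ c ≤ ((4 * s) ^ 3) ^ c := by
    rcases Nat.eq_zero_or_pos c with rfl | ha
    · simp
    · exact Nat.pow_le_pow_left (le_trans (by norm_num) (Nat.pow_le_pow_left (show 8 ≤ 4 * s by omega) 3)) _
  have hD : 24 ^ d ≤ ((4 * s) ^ 4) ^ d := 
    Nat.pow_le_pow_left (le_trans (by norm_num) (Nat.pow_le_pow_left (show 4 ≤ 4 * s by omega) 4)) _
  gcongr

lemma fact_div (N k : ℕ) (hk : k ≤ N) :
    ((N - k).factorial : ℝ) / (N.factorial : ℝ) = 1 / (N.descFactorial k : ℝ) := by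
  have h := Nat.factorial_mul_descFactorial hk
  have h1 : (N.descFactorial k : ℝ) ≠ 0 := by
    have := Nat.descFactorial_pos.2 hk
    positivity
  rw [← h]
  push_cast
  have := Nat.factorial_ne_zero (N - k)
  field_simp

lemma term_bound (n : ℕ) (hn : 1 ≤ n) (m : Fin 5 → ℕ)
    (hm : m ∈ Finset.Nat.antidiagonalTuple 5 n) :
      |term n m| ≤ (Nat.multinomial Finset.univ m : ℝ) *
        (4 / (4 * (n : ℝ) - 3)) ^ (m 1 + 2 * m 2 + 3 * m 3 + 4 * m 4) *
        ((4 * n).descFactorial (m 1 + 2 * m 2 + 3 * m 3 + 4 * m 4) : ℝ) := by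
  rw [Finset.Nat.mem_antidiagonalTuple, Fin.sum_univ_five] at hm
  have hw := weight_le n (m 1) (m 2) (m 3) (m 4) (by omega)
  have hk : m 1 + 2 * m 2 + 3 * m 3 + 4 * m 4 ≤ 4 * n := by omega
  rw [term, mul_div_assoc, fact_div _ _ hk]
  set k := m 1 + 2 * m 2 + 3 * m 3 + 4 * m 4
  have hd := desc_sq (4 * n) k hk
  have hpos : (0:ℝ) < (4 * n).descFactorial k := by exact_mod_cast Nat.descFactorial_pos.2 hk
  have hn3 : (0:ℝ) < 4 * n - 3 := by
    have : (1:ℝ) ≤ n := by exact_mod_cast hn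
    linarith
  simp only [abs_mul, abs_pow, abs_neg, abs_one, one_pow, one_mul, Nat.abs_cast, Nat.abs_ofNat]
  rw [abs_of_pos (by positivity : 0 < 1 / ((4 * n).descFactorial k : ℝ))]
  have key : (16:ℝ) ^ m 1 * 72 ^ m 2 * 96 ^ m 3 * 24 ^ m 4 ≤
      (4 / (4 * (n : ℝ) - 3)) ^ k * ((4 * n).descFactorial k : ℝ) ^ 2 := by
    calc (16:ℝ) ^ m 1 * 72 ^ m 2 * 96 ^ m 3 * 24 ^ m 4
        ≤ ((4 * ((4 * n + 1 - k : ℕ) : ℝ))) ^ k := by exact_mod_cast hw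
      _ ≤ ((4 / (4 * (n : ℝ) - 3)) * ((4 * n : ℕ) * ((4 * n + 1 - k : ℕ) : ℝ))) ^ k := by
        have : (4:ℝ) ≤ 4 / (4 * (n : ℝ) - 3) * (4 * n : ℕ) := by
          rw [div_mul_eq_mul_div, le_div_iff₀ hn3]
          push_cast
          linarith
        rw [← mul_assoc]
        gcongr
      _ = (4 / (4 * (n : ℝ) - 3)) ^ k * ((4 * n : ℕ) * ((4 * n + 1 - k : ℕ) : ℝ)) ^ k := by
        rw [mul_pow]
      _ ≤ _ := by
        gcongr
        exact_mod_cast hd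
  calc (Nat.multinomial Finset.univ m : ℝ) * 16 ^ m 1 * 72 ^ m 2 * 96 ^ m 3 * 24 ^ m 4 *
        (1 / ((4 * n).descFactorial k : ℝ))
      = (Nat.multinomial Finset.univ m : ℝ) * (16 ^ m 1 * 72 ^ m 2 * 96 ^ m 3 * 24 ^ m 4) *
        (1 / ((4 * n).descFactorial k : ℝ)) := by ring
    _ ≤ (Nat.multinomial Finset.univ m : ℝ) *
        ((4 / (4 * (n : ℝ) - 3)) ^ k * ((4 * n).descFactorial k : ℝ) ^ 2) *
        (1 / ((4 * n).descFactorial k : ℝ)) := by gcongr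
    _ = _ := by field_simp

noncomputable def G (n : ℕ) (p : ℕ × ℕ × ℕ × ℕ) : ℝ :=
  ((-16) ^ p.1 / (p.1.factorial : ℝ)) * (72 ^ p.2.1 / (p.2.1.factorial : ℝ)) *
  ((-96) ^ p.2.2.1 / (p.2.2.1.factorial : ℝ)) * (24 ^ p.2.2.2 / (p.2.2.2.factorial : ℝ)) *
  ((n.descFactorial (p.1 + p.2.1 + p.2.2.1 + p.2.2.2) : ℝ) /
    ((4 * n).descFactorial (p.1 + 2 * p.2.1 + 3 * p.2.2.1 + 4 * p.2.2.2) : ℝ))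

lemma term_eq_G (n : ℕ) (m : Fin 5 → ℕ) (hm : m ∈ Finset.Nat.antidiagonalTuple 5 n) :
    term n m = G n (m 1, m 2, m 3, m 4) := by
  rw [Finset.Nat.mem_antidiagonalTuple] at hm
  have hmul := Nat.multinomial_spec Finset.univ m
  rw [hm] at hmul
  rw [Fin.sum_univ_five] at hm
  have hk : m 1 + 2 * m 2 + 3 * m 3 + 4 * m 4 ≤ 4 * n := by omega
  have hs : m 1 + m 2 + m 3 + m 4 ≤ n := by omega
  have h0 : n - (m 1 + m 2 + m 3 + m 4) = m 0 := by omega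
  have hf := Nat.factorial_mul_descFactorial hs
  rw [h0] at hf
  rw [Fin.prod_univ_five] at hmul
  have hM : (Nat.multinomial Finset.univ m : ℝ) = (n.descFactorial (m 1 + m 2 + m 3 + m 4) : ℝ) /
      ((m 1).factorial * (m 2).factorial * (m 3).factorial * (m 4).factorial) := by
    rw [eq_div_iff (by positivity)]
    have h1 : ((m 0).factorial : ℝ) ≠ 0 := by positivity
    apply mul_left_cancel₀ h1
    have h2 : (m 0).factorial * (Nat.multinomial Finset.univ m * ((m 1).factorial * (m 2).factorial * (m 3).factorial * (m 4).factorial)) = (m 0).factorial * n.descFactorial (m 1 + m 2 + m 3 + m 4) := by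
      rw [hf, ← hmul]; ring
    exact_mod_cast h2
  rw [term, mul_div_assoc, fact_div _ _ hk, hM, G]
  simp only
  rw [neg_pow (16:ℝ), neg_pow (96:ℝ)]
  ring

lemma sum_eq_tsum (n : ℕ) :
    ∑ m ∈ Finset.Nat.antidiagonalTuple 5 n, term n m = ∑' p, G n p := by
  classical
  let φ : (Fin 5 → ℕ) → ℕ × ℕ × ℕ × ℕ := fun m => (m 1, m 2, m 3, m 4)
  rw [tsum_eq_sum (s := (Finset.Nat.antidiagonalTuple 5 n).image φ), Finset.sum_image]
  · exact Finset.sum_congr rfl fun m hm => term_eq_G n m hm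
  · intro m hm m' hm' h
    rw [Finset.mem_coe, Finset.Nat.mem_antidiagonalTuple, Fin.sum_univ_five] at hm hm'
    simp only [φ, Prod.mk.injEq] at h
    obtain ⟨h1, h2, h3, h4⟩ := h
    funext i
    fin_cases i
    · show m 0 = m' 0
      omega
    all_goals assumption
  · rintro ⟨a, b, c, d⟩ hp
    by_cases h : a + b + c + d ≤ n
    · exfalso
      apply hp
      rw [Finset.mem_image]
      refine ⟨![n - (a + b + c + d), a, b, c, d], ?_, rfl⟩
      rw [Finset.Nat.mem_antidiagonalTuple, Fin.sum_univ_five]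
      simp
      omega
    · have : n.descFactorial (a + b + c + d) = 0 := Nat.descFactorial_eq_zero_iff_lt.2 (by omega)
      simp [G, this]

lemma desc_four (n s : ℕ) : 4 ^ s * n.descFactorial s ≤ (4 * n).descFactorial s := by
  rw [Nat.descFactorial_eq_prod_range, Nat.descFactorial_eq_prod_range]
  calc 4 ^ s * ∏ i ∈ Finset.range s, (n - i) = ∏ i ∈ Finset.range s, (4 * (n - i)) := by
        rw [Finset.prod_mul_distrib]; simp
    _ ≤ _ := Finset.prod_le_prod' fun i _ => by omega

lemma ratio_le (n s k : ℕ) (hsk : s ≤ k) (hks : k ≤ 4 * s) :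
    (n.descFactorial s : ℝ) / ((4 * n).descFactorial k : ℝ) ≤ (1 / 4) ^ s := by
  by_cases h : s ≤ n
  · have hp : (0:ℝ) < (4 * n).descFactorial k := by
      exact_mod_cast Nat.descFactorial_pos.2 (by omega)
    rw [div_le_iff₀ hp, one_div, inv_pow, inv_mul_eq_div, le_div_iff₀ (by positivity), mul_comm]
    have h2 : (4 * n).descFactorial s ≤ (4 * n).descFactorial k := by
      rw [← Nat.descFactorial_mul_descFactorial hsk]
      exact Nat.le_mul_of_pos_left _ (Nat.descFactorial_pos.2 (by omega))
    exact_mod_cast (desc_four n s).trans h2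
  · have : n.descFactorial s = 0 := Nat.descFactorial_eq_zero_iff_lt.2 (by omega)
    simp [this]

noncomputable def B (p : ℕ × ℕ × ℕ × ℕ) : ℝ :=
  (4 ^ p.1 / (p.1.factorial : ℝ)) * ((18 ^ p.2.1 / (p.2.1.factorial : ℝ)) *
  ((24 ^ p.2.2.1 / (p.2.2.1.factorial : ℝ)) * (6 ^ p.2.2.2 / (p.2.2.2.factorial : ℝ))))

lemma B_summable : Summable B := by
  have e := Real.summable_pow_div_factorial
  have h1 := (e 24).mul_of_nonneg (e 6) (fun _ => by positivity) (fun _ => by positivity)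
  have h2 := (e 18).mul_of_nonneg h1 (fun _ => by positivity) (fun _ => by simp only [Pi.zero_apply]; positivity)
  exact (e 4).mul_of_nonneg h2 (fun _ => by positivity) (fun _ => by simp only [Pi.zero_apply]; positivity)

lemma G_le (n : ℕ) (p) : ‖G n p‖ ≤ B p := by
  obtain ⟨a, b, c, d⟩ := p
  have h := ratio_le n (a + b + c + d) (a + 2 * b + 3 * c + 4 * d) (by omega) (by omega)
  have h0 : (0:ℝ) ≤ (n.descFactorial (a + b + c + d) : ℝ) / ((4 * n).descFactorial (a + 2 * b + 3 * c + 4 * d) : ℝ) := by positivity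
  simp only [G, B, norm_mul, norm_div, norm_pow, norm_neg, Real.norm_ofNat, Real.norm_natCast]
  have h1 : (16 : ℝ) ^ a / (a.factorial : ℝ) * (72 ^ b / (b.factorial : ℝ)) * (96 ^ c / (c.factorial : ℝ)) * (24 ^ d / (d.factorial : ℝ)) * (1 / 4) ^ (a + b + c + d) = 4 ^ a / (a.factorial : ℝ) * (18 ^ b / (b.factorial : ℝ) * (24 ^ c / (c.factorial : ℝ) * (6 ^ d / (d.factorial : ℝ)))) := by
    have e1 : (16:ℝ) ^ a = 4 ^ a * 4 ^ a := by rw [← mul_pow]; norm_num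
    have e2 : (72:ℝ) ^ b = 18 ^ b * 4 ^ b := by rw [← mul_pow]; norm_num
    have e3 : (96:ℝ) ^ c = 24 ^ c * 4 ^ c := by rw [← mul_pow]; norm_num
    have e4 : (24:ℝ) ^ d = 6 ^ d * 4 ^ d := by rw [← mul_pow]; norm_num
    rw [e1, e2, e3, e4]
    simp only [pow_add, one_div, inv_pow]
    field_simp
  rw [← h1]
  gcongr

lemma ratio_lim (s k : ℕ) (hsk : s ≤ k) :
    Filter.Tendsto (fun n : ℕ => (n.descFactorial s : ℝ) / ((4 * n).descFactorial k : ℝ))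
      Filter.atTop (nhds (if s = k then (1 / 4) ^ s else 0)) := by
  have h4 : Filter.Tendsto (fun n : ℕ => 4 * n) Filter.atTop Filter.atTop :=
    Filter.tendsto_id.const_mul_atTop' (by norm_num)
  have E := (isEquivalent_descFactorial s).div ((isEquivalent_descFactorial k).comp_tendsto h4)
  refine E.symm.tendsto_nhds ?_
  obtain ⟨j, rfl⟩ : ∃ j, k = s + j := ⟨k - s, by omega⟩
  have : Filter.Tendsto (fun n : ℕ => (1 / 4 : ℝ) ^ s * ((1 / 4) * (n : ℝ)⁻¹) ^ j) Filter.atTop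
      (nhds ((1 / 4 : ℝ) ^ s * ((1 / 4) * 0) ^ j)) :=
    ((tendsto_inv_atTop_nhds_zero_nat.const_mul _).pow _).const_mul _
  have hl : (if s = s + j then (1 / 4 : ℝ) ^ s else 0) = (1 / 4 : ℝ) ^ s * ((1 / 4) * 0) ^ j := by
    rcases Nat.eq_zero_or_pos j with rfl | hj
    · simp
    · rw [if_neg (by omega), mul_zero, zero_pow (by omega), mul_zero]
  rw [hl]
  refine this.congr' ?_
  filter_upwards [Filter.eventually_ge_atTop 1] with n hn
  have hn' : (n : ℝ) ≠ 0 := by positivity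
  simp only [Function.comp, Pi.div_apply, Nat.cast_mul, Nat.cast_ofNat, mul_pow, pow_add, one_div, inv_pow]
  field_simp

noncomputable def G0 (p : ℕ × ℕ × ℕ × ℕ) : ℝ :=
  if p.2 = (0, 0, 0) then (-4) ^ p.1 / (p.1.factorial : ℝ) else 0

lemma G_lim (p) : Filter.Tendsto (fun n => G n p) Filter.atTop (nhds (G0 p)) := by
  obtain ⟨a, b, c, d⟩ := p
  have h := (ratio_lim (a + b + c + d) (a + 2 * b + 3 * c + 4 * d) (by omega)).const_mul
    ((-16 : ℝ) ^ a / (a.factorial : ℝ) * (72 ^ b / (b.factorial : ℝ)) * ((-96) ^ c / (c.factorial : ℝ)) * (24 ^ d / (d.factorial : ℝ)))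
  refine (show G0 (a, b, c, d) = _ from ?_) ▸ h
  simp only [G0, Prod.mk.injEq]
  by_cases hz : b = 0 ∧ c = 0 ∧ d = 0
  · obtain ⟨rfl, rfl, rfl⟩ := hz
    have e1 : (-16:ℝ) ^ a = (-4) ^ a * 4 ^ a := by rw [← mul_pow]; norm_num
    rw [e1]
    simp
    field_simp
  · rw [if_neg hz, if_neg (by omega), mul_zero]

lemma tsum_G0 : ∑' p, G0 p = Real.exp (-4) := by
  have hinj : Function.Injective (fun a : ℕ => ((a, 0, 0, 0) : ℕ × ℕ × ℕ × ℕ)) := by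
    intro a b h
    simpa using h
  rw [← hinj.tsum_eq, Real.exp_eq_exp_ℝ, NormedSpace.exp_eq_tsum_div]
  · simp [G0]
  · rintro ⟨a, q⟩ hp
    by_cases h : q = (0, 0, 0)
    · exact ⟨a, by simp [h]⟩
    · simp [G0, h] at hp

theorem no_rank_fixed_point_probability :
    (∀ n : ℕ, (R n : ℝ) / (Nat.factorial (4 * n) : ℝ) =
      ∑ m ∈ Finset.Nat.antidiagonalTuple 5 n, term n m) ∧
    (∀ n : ℕ, 1 ≤ n → ∀ m ∈ Finset.Nat.antidiagonalTuple 5 n,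
      |term n m| ≤ (Nat.multinomial Finset.univ m : ℝ) *
        (4 / (4 * (n : ℝ) - 3)) ^ (m 1 + 2 * m 2 + 3 * m 3 + 4 * m 4) *
        ((4 * n).descFactorial (m 1 + 2 * m 2 + 3 * m 3 + 4 * m 4) : ℝ)) ∧
    Filter.Tendsto (fun n : ℕ => (R n : ℝ) / (Nat.factorial (4 * n) : ℝ))
      Filter.atTop (nhds (Real.exp (-4))) := by

  refine ⟨R_formula, term_bound, ?_⟩
  simp_rw [R_formula, sum_eq_tsum]
  rw [← tsum_G0]
  exact tendsto_tsum_of_dominated_convergence B_summable G_lim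
    (Filter.Eventually.of_forall G_le)
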